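/- arXiv:1706.09246 — 2 statements merged into one kernel-verified Lean document; each statement's English description precedes it below -/
import Mathlib

section
/- Let n and b be natural numbers with n ≥ 2, b ≥ 2 and b not congruent to 1 modulo 3, and write s_i = (b+1)·b^(n+i) + 1. Then Ap(T_{b'}(n), s_0) = { t_1·s_1 + t_2·s_2 + ⋯ + t_(n+1)·s_(n+1) : (t_1,…,t_(n+1)) ∈ R_{b'}(n) }. -/
/-- The Thabit numerical semigroup of the second kind base `b`: the additive submonoid of ℕ
generated by `{(b+1)·b^(n+i) + 1 : i ∈ ℕ}`. -/
def thabitSemigroup2 (b n : ℕ) : AddSubmonoid ℕ :=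
  AddSubmonoid.closure {m : ℕ | ∃ i : ℕ, m = (b + 1) * b ^ (n + i) + 1}

/-- `R_{b'}(n)`: tuples `(t_1,…,t_(n+1))` with entries in `{0,…,b}` (encoded as functions
`ℕ → ℕ` supported on `{1,…,n+1}`) such that: if `t_i = b` then `t_j = 0` for all `j < i`;
`t_(n+1) ≤ b−1`; if `t_(n+1) = b−1` then `t_n ≤ b−1`; and if `t_n = t_(n+1) = b−1` then
`t_1 ≤ 2` and `t_i = 0` for every index `i ∉ {1, n, n+1}`. -/
def Rb' (b n : ℕ) (t : ℕ → ℕ) : Prop :=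
  (∀ j, t j ≤ b) ∧
  (∀ j, j ∉ Finset.Icc 1 (n + 1) → t j = 0) ∧
  (∀ i, t i = b → ∀ j < i, t j = 0) ∧
  t (n + 1) ≤ b - 1 ∧
  (t (n + 1) = b - 1 → t n ≤ b - 1) ∧
  (t n = b - 1 → t (n + 1) = b - 1 →
    t 1 ≤ 2 ∧ ∀ i, i ≠ 1 → i ≠ n → i ≠ n + 1 → t i = 0)

/-!
Put `K = (b + 1) * b ^ n` and `r_j = 1 + b + ⋯ + b ^ (j - 1)`. As `(b - 1) * r_j + 1 = b ^ j`, we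
have `s_j = (b - 1) * K * r_j + (K + 1)`, so a sum of `L` generators equals
`(b - 1) * K * N + (K + 1) * L` with `N` a sum of `L` repunits `r_j`. Since `b % 3 ≠ 1`, the number
`s_0 = K + 1` is coprime to `(b - 1) * K`; hence the class of such an element modulo `s_0` is the
class of `N`, and its smallest member has `N ≤ K` and `L` minimal for `N`.

The minimal `L` is attained by the greedy expansion `N = ∑ t_j * r_j`. A shorter representation
`N = ∑ c_j * r_j` would have `∑ c_j * b ^ j < ∑ t_j * b ^ j`, because both sides are `(b - 1) * N`
plus the number of summands. But for a greedy `t` this inequality, divided by powers of `b` with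
rounding, forces `∑ c_j * r_j < ∑ t_j * r_j`.

Finally `K = (b - 1) * r_n + (b - 1) * r_(n+1) + 2`, so for a greedy `t` the bound `N ≤ K` can be
read off `t_n`, `t_(n+1)` and, if both equal `b - 1`, whether the other digits contribute at most
`2`.
-/

open Finset

/-- The repunit with `j` digits `1` in base `b`. Starting at `repunit b 0 = 0`, it measures how far
the `j`-th generator `K * b ^ j + 1` exceeds the smallest one, in units of `(b - 1) * K`. -/
def repunit (b j : ℕ) : ℕ := ∑ i ∈ range j, b ^ i

@[simp] theorem repunit_zero (b : ℕ) : repunit b 0 = 0 := rfl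

@[simp] theorem repunit_one (b : ℕ) : repunit b 1 = 1 := by simp [repunit]

theorem repunit_succ (b j : ℕ) : repunit b (j + 1) = b * repunit b j + 1 := geom_sum_succ

theorem repunit_succ' (b j : ℕ) : repunit b (j + 1) = repunit b j + b ^ j := sum_range_succ _ _

theorem monotone_repunit (b : ℕ) : Monotone (repunit b) :=
  monotone_nat_of_le_succ fun j => (repunit_succ' b j).symm ▸ Nat.le_add_right _ _

theorem three_le_repunit {b j : ℕ} (hb : 2 ≤ b) (hj : 2 ≤ j) : 3 ≤ repunit b j :=
  calc 3 ≤ repunit b 2 := by simp [repunit_succ]; omega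
    _ ≤ repunit b j := monotone_repunit b hj

theorem pred_mul_repunit_add_one {b : ℕ} (hb : 0 < b) (j : ℕ) :
    (b - 1) * repunit b j + 1 = b ^ j := by
  obtain ⟨a, rfl⟩ := Nat.exists_eq_add_of_lt hb
  simpa [repunit, mul_comm] using geom_sum_mul_add a j

section Weight

open Finsupp

theorem weight_eq_sum_of_support_subset (w : ℕ → ℕ) {c : ℕ →₀ ℕ} {s : Finset ℕ}
    (hc : c.support ⊆ s) : weight w c = ∑ j ∈ s, c j * w j :=
  c.sum_of_support_subset hc _ (by simp)

theorem weight_pow_eq {b : ℕ} (hb : 0 < b) (c : ℕ →₀ ℕ) :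
    weight (fun j => b ^ j) c = (b - 1) * weight (repunit b) c + degree c := by
  induction c using Finsupp.induction_linear with
  | zero => simp
  | add f g hf hg => simp only [map_add, hf, hg]; ring
  | single j m =>
    simp only [weight_single, degree_single, smul_eq_mul, ← pred_mul_repunit_add_one hb j]
    ring

theorem weight_mul_pow_add_one_eq {b : ℕ} (hb : 0 < b) (K : ℕ) (c : ℕ →₀ ℕ) :
    weight (fun j => K * b ^ j + 1) c =
      (b - 1) * K * weight (repunit b) c + (K + 1) * degree c := by
  induction c using Finsupp.induction_linear with
  | zero => simp
  | add f g hf hg => simp only [map_add, hf, hg]; ring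
  | single j m =>
    simp only [weight_single, degree_single, smul_eq_mul, ← pred_mul_repunit_add_one hb j]
    ring

end Weight

section Greedy

variable {b : ℕ} {t : ℕ → ℕ}

/-- The digit sequences of greedy expansions `∑ t j * repunit b j`: since
`repunit b (j + 1) = b * repunit b j + 1`, a digit may equal `b`, but only above zeros. The digit
at `0`, where the repunit vanishes, is required to be `0`. -/
structure IsGreedy (b : ℕ) (t : ℕ → ℕ) : Prop where
  zero : t 0 = 0
  le (i : ℕ) : t i ≤ b
  eq_zero_of_lt {i j : ℕ} : t i = b → j < i → t j = 0

theorem IsGreedy.sum_mul_repunit_lt (ht : IsGreedy b t) {k : ℕ} (hk : 0 < k) :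
    ∑ j ∈ range k, t j * repunit b j < repunit b k := by
  induction k, hk using Nat.le_induction with
  | base => simp
  | succ k _ ih =>
    rw [sum_range_succ, repunit_succ b k]
    rcases (ht.le k).lt_or_eq with hlt | heq
    · have := Nat.mul_le_mul_right (repunit b k) hlt
      rw [Nat.succ_mul] at this
      omega
    · rw [sum_eq_zero fun j hj => by rw [ht.eq_zero_of_lt heq (mem_range.1 hj), zero_mul], heq]
      omega

theorem sum_mul_pow_range_succ (b : ℕ) (f : ℕ → ℕ) (k : ℕ) :
    ∑ j ∈ range (k + 1), f j * b ^ j = f 0 + b * ∑ j ∈ range k, f (j + 1) * b ^ j := by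
  rw [sum_range_succ', mul_sum, pow_zero, mul_one, add_comm]
  exact congrArg _ (sum_congr rfl fun j _ => by ring)

theorem sum_mul_repunit_range_succ (b : ℕ) (f : ℕ → ℕ) (k : ℕ) :
    ∑ j ∈ range (k + 1), f j * repunit b j =
      ∑ j ∈ range k, f (j + 1) * repunit b j + ∑ j ∈ range k, f (j + 1) * b ^ j := by
  simp [sum_range_succ', repunit_succ', mul_add, sum_add_distrib]

theorem sum_mul_repunit_le_of_sum_mul_pow_le {k : ℕ} {f : ℕ → ℕ} (ht : ∀ j, t j < b)
    (h : ∑ j ∈ range k, f j * b ^ j ≤ ∑ j ∈ range k, t j * b ^ j) :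
    ∑ j ∈ range k, f j * repunit b j ≤ ∑ j ∈ range k, t j * repunit b j := by
  induction k generalizing f t with
  | zero => simp
  | succ k ih =>
    rw [sum_mul_pow_range_succ, sum_mul_pow_range_succ] at h
    have htail : ∑ j ∈ range k, f (j + 1) * b ^ j ≤ ∑ j ∈ range k, t (j + 1) * b ^ j := by
      have := ht 0
      refine Nat.lt_succ_iff.1 (Nat.lt_of_mul_lt_mul_left (a := b) ?_)
      rw [Nat.mul_succ]
      omega
    rw [sum_mul_repunit_range_succ, sum_mul_repunit_range_succ]
    exact Nat.add_le_add (ih (fun j => ht (j + 1)) htail) htail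

theorem sum_mul_repunit_le_of_sum_mul_pow_lt {k : ℕ} {f : ℕ → ℕ} (ht0 : t 0 ≤ b)
    (ht : ∀ j, t (j + 1) < b)
    (h : ∑ j ∈ range k, f j * b ^ j < ∑ j ∈ range k, t j * b ^ j) :
    ∑ j ∈ range k, f j * repunit b j ≤ ∑ j ∈ range k, t j * repunit b j := by
  cases k with
  | zero => simp
  | succ k =>
    rw [sum_mul_pow_range_succ, sum_mul_pow_range_succ] at h
    have htail : ∑ j ∈ range k, f (j + 1) * b ^ j ≤ ∑ j ∈ range k, t (j + 1) * b ^ j := by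
      refine Nat.lt_succ_iff.1 (Nat.lt_of_mul_lt_mul_left (a := b) ?_)
      rw [Nat.mul_succ]
      omega
    rw [sum_mul_repunit_range_succ, sum_mul_repunit_range_succ]
    exact Nat.add_le_add (sum_mul_repunit_le_of_sum_mul_pow_le ht htail) htail

theorem IsGreedy.sum_mul_repunit_lt_of_sum_mul_pow_lt (ht : IsGreedy b t) {k : ℕ} {f : ℕ → ℕ}
    (h : ∑ j ∈ range k, f j * b ^ j < ∑ j ∈ range k, t j * b ^ j) :
    ∑ j ∈ range k, f j * repunit b j < ∑ j ∈ range k, t j * repunit b j := by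
  induction k generalizing f t with
  | zero => simp at h
  | succ k ih =>
    rw [sum_mul_pow_range_succ, sum_mul_pow_range_succ, ht.zero, zero_add] at h
    have htail : ∑ j ∈ range k, f (j + 1) * b ^ j < ∑ j ∈ range k, t (j + 1) * b ^ j :=
      Nat.lt_of_mul_lt_mul_left ((Nat.le_add_left _ _).trans_lt h)
    rw [sum_mul_repunit_range_succ, sum_mul_repunit_range_succ]
    refine Nat.add_lt_add_of_le_of_lt ?_ htail
    by_cases h1 : t 1 = 0
    · have hshift : IsGreedy b fun j => t (j + 1) :=
        ⟨h1, fun i => ht.le (i + 1), fun hi hj => ht.eq_zero_of_lt hi (Nat.succ_lt_succ hj)⟩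
      exact (ih hshift htail).le
    · refine sum_mul_repunit_le_of_sum_mul_pow_lt (ht.le 1) (fun j => ?_) htail
      exact (ht.le (j + 2)).lt_of_ne fun hj => h1 (ht.eq_zero_of_lt hj (by omega))

end Greedy

section Finsupp

open Finsupp

variable {b : ℕ} {t : ℕ →₀ ℕ}

theorem IsGreedy.degree_le_of_weight_eq (hb : 0 < b) (ht : IsGreedy b t) {c : ℕ →₀ ℕ}
    (h : weight (repunit b) c = weight (repunit b) t) : degree t ≤ degree c := by
  by_contra! hlt
  obtain ⟨k, hk⟩ := exists_nat_subset_range (c.support ∪ t.support)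
  have hpow : weight (fun j => b ^ j) c < weight (fun j => b ^ j) t := by
    rw [weight_pow_eq hb, weight_pow_eq hb, h]
    exact Nat.add_lt_add_left hlt _
  rw [weight_eq_sum_of_support_subset _ (union_subset_left hk),
    weight_eq_sum_of_support_subset _ (union_subset_right hk)] at hpow h
  exact (ht.sum_mul_repunit_lt_of_sum_mul_pow_lt hpow).ne h

theorem IsGreedy.add_single_one (ht : IsGreedy b t) (hlt : ∀ i, t i < b) :
    IsGreedy b (t + single 1 1 : ℕ →₀ ℕ) where
  zero := by simp [ht.zero]
  le i := by
    have := hlt i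
    have : single 1 1 i ≤ 1 := by rw [single_apply]; split_ifs <;> omega
    rw [Finsupp.add_apply]
    omega
  eq_zero_of_lt {i j} hi hj := by
    have := hlt i
    obtain rfl : i = 1 := by
      by_contra hi1
      simp [Ne.symm hi1] at hi
      omega
    obtain rfl : j = 0 := by omega
    simp [ht.zero]

theorem IsGreedy.erase_add_single (hb : 0 < b) (ht : IsGreedy b t) {i : ℕ} (hi : t i = b) :
    IsGreedy b (t.erase i + single (i + 1) 1 : ℕ →₀ ℕ) := by
  have htlt : ∀ j, i < j → t j < b := fun j hj =>
    (ht.le j).lt_of_ne fun hjb => by have := ht.eq_zero_of_lt hjb hj; omega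
  have hzero : ∀ j ≤ i, (t.erase i + single (i + 1) 1 : ℕ →₀ ℕ) j = 0 := fun j hj => by
    rcases hj.eq_or_lt with rfl | hj
    · simp
    · simp [erase_ne hj.ne, ht.eq_zero_of_lt hi hj, single_apply]; omega
  have hgt : ∀ j, i < j →
      (t.erase i + single (i + 1) 1 : ℕ →₀ ℕ) j = t j + if i + 1 = j then 1 else 0 :=
      fun j hj => by simp [erase_ne hj.ne', single_apply]
  refine ⟨hzero 0 (Nat.zero_le i), fun j => ?_, fun {l j} hl hj => hzero j ?_⟩
  · rcases le_or_gt j i with hj | hj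
    · simp [hzero j hj]
    · have := htlt j hj
      rw [hgt j hj]
      split_ifs <;> omega
  · by_contra! hij
    have := htlt l (by omega)
    rw [hgt l (by omega), if_neg (by omega)] at hl
    omega

theorem exists_isGreedy_weight_eq (hb : 0 < b) (N : ℕ) :
    ∃ t : ℕ →₀ ℕ, IsGreedy b t ∧ weight (repunit b) t = N := by
  induction N with
  | zero => exact ⟨0, ⟨rfl, fun _ => Nat.zero_le b, fun _ _ => rfl⟩, map_zero _⟩
  | succ N ih =>
    obtain ⟨t, ht, rfl⟩ := ih
    by_cases hfull : ∃ i, t i = b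
    · obtain ⟨i, hi⟩ := hfull
      refine ⟨_, ht.erase_add_single hb hi, ?_⟩
      conv_rhs => rw [← erase_add_single i t, hi]
      simp [weight_single, repunit_succ, add_assoc]
    · push Not at hfull
      exact ⟨_, ht.add_single_one fun i => (ht.le i).lt_of_ne (hfull i), by simp [weight_single]⟩

/-- The least number of repunits in base `b` with sum `N`. -/
noncomputable def repunitLength (b N : ℕ) : ℕ :=
  sInf {L | ∃ c : ℕ →₀ ℕ, weight (repunit b) c = N ∧ degree c = L}

theorem repunitLength_le_degree (b : ℕ) (c : ℕ →₀ ℕ) :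
    repunitLength b (weight (repunit b) c) ≤ degree c :=
  Nat.sInf_le ⟨c, rfl, rfl⟩

theorem repunitLength_le_self (b N : ℕ) : repunitLength b N ≤ N := by
  simpa [weight_single] using repunitLength_le_degree b (single 1 N)

theorem exists_weight_eq_degree_eq_iff (b N L : ℕ) :
    (∃ c : ℕ →₀ ℕ, weight (repunit b) c = N ∧ degree c = L) ↔ repunitLength b N ≤ L := by
  refine ⟨fun ⟨c, hN, hL⟩ => hN ▸ hL ▸ repunitLength_le_degree b c, fun h => ?_⟩
  obtain ⟨c, hN, hL⟩ : repunitLength b N ∈ {L | ∃ c : ℕ →₀ ℕ, _ ∧ degree c = L} :=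
    Nat.sInf_mem ⟨N, single 1 N, by simp [weight_single]⟩
  -- Copies of `repunit b 0 = 0` pad a representation to any larger length.
  refine ⟨c + single 0 (L - repunitLength b N), by rw [map_add, hN, weight_single]; simp, ?_⟩
  rw [map_add, hL, degree_single, Nat.add_sub_cancel' h]

theorem IsGreedy.degree_eq_repunitLength (hb : 0 < b) (ht : IsGreedy b t) :
    degree t = repunitLength b (weight (repunit b) t) := by
  obtain ⟨c, hc, hdeg⟩ :=
    (exists_weight_eq_degree_eq_iff b (weight (repunit b) t) _).2 le_rfl
  exact le_antisymm (hdeg ▸ ht.degree_le_of_weight_eq hb hc) (repunitLength_le_degree b t)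

end Finsupp

section Apery

/-- The Apéry set of the submonoid `S` of `ℕ` with respect to `x`: the elements of `S` from which
`x` cannot be subtracted within `S`. -/
def aperySet (S : AddSubmonoid ℕ) (x : ℕ) : Set ℕ :=
  {s | s ∈ S ∧ ¬ ∃ t ∈ S, t + x = s}

theorem apply_mod_le_mul_div_add {p q : ℕ} {g : ℕ → ℕ} (hq : 0 < q) (hg : ∀ N < q, g N ≤ p)
    (N : ℕ) : g (N % q) ≤ p * (N / q) + g N := by
  rcases Nat.eq_zero_or_pos (N / q) with h0 | hpos
  · rw [Nat.mod_eq_of_lt ((Nat.div_eq_zero_iff_lt hq).1 h0)]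
    exact Nat.le_add_left _ _
  · calc g (N % q) ≤ p := hg _ (Nat.mod_lt N hq)
      _ ≤ p * (N / q) := Nat.le_mul_of_pos_right p hpos
      _ ≤ p * (N / q) + g N := Nat.le_add_right _ _

theorem mul_add_mul_eq_mul_mod_add (p q N L : ℕ) :
    p * N + q * L = p * (N % q) + q * (p * (N / q) + L) := by
  conv_lhs => rw [← Nat.div_add_mod N q]
  ring

theorem aperySet_eq_of_mem_iff {S : AddSubmonoid ℕ} {p q : ℕ} {g : ℕ → ℕ} (hq : 0 < q)
    (hpq : q.Coprime p) (hg : ∀ N < q, g N ≤ p)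
    (hS : ∀ x, x ∈ S ↔ ∃ N L, g N ≤ L ∧ x = p * N + q * L) :
    aperySet S q = {x | ∃ N < q, x = p * N + q * g N} := by
  ext x
  constructor
  · rintro ⟨hx, hmin⟩
    obtain ⟨N, L, hL, rfl⟩ := (hS x).1 hx
    refine ⟨N % q, Nat.mod_lt N hq, ?_⟩
    rw [mul_add_mul_eq_mul_mod_add]
    have hge : g (N % q) ≤ p * (N / q) + L :=
      (apply_mod_le_mul_div_add hq hg N).trans (Nat.add_le_add_left hL _)
    rcases hge.eq_or_lt with heq | hlt
    · rw [heq]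
    · obtain ⟨e, he⟩ := Nat.exists_eq_add_of_lt hlt
      refine absurd ⟨_, (hS _).2 ⟨N % q, g (N % q) + e, Nat.le_add_right _ _, rfl⟩, ?_⟩ hmin
      rw [mul_add_mul_eq_mul_mod_add p q N L, he]
      ring
  · rintro ⟨N, hN, rfl⟩
    refine ⟨(hS _).2 ⟨N, g N, le_rfl, rfl⟩, ?_⟩
    rintro ⟨y, hy, hyx⟩
    obtain ⟨M, L, hL, rfl⟩ := (hS y).1 hy
    have hmod : M % q = N := by
      rw [← Nat.mod_eq_of_lt hN]
      refine Nat.ModEq.cancel_left_of_coprime hpq ?_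
      have := congrArg (· % q) hyx
      simpa [Nat.ModEq, add_assoc, ← Nat.mul_succ] using this
    have hlen : p * (M / q) + L + 1 = g N := by
      refine Nat.eq_of_mul_eq_mul_left hq ?_
      rw [mul_add_mul_eq_mul_mod_add, hmod] at hyx
      linarith
    have := apply_mod_le_mul_div_add hq hg M
    rw [hmod] at this
    omega

open Finsupp

variable {b K : ℕ}

theorem mem_closure_range_mul_pow_add_one_iff (hb : 0 < b) (x : ℕ) :
    x ∈ AddSubmonoid.closure (Set.range fun j => K * b ^ j + 1) ↔
      ∃ N L, repunitLength b N ≤ L ∧ x = (b - 1) * K * N + (K + 1) * L := by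
  simp only [← exists_weight_eq_degree_eq_iff]
  rw [AddSubmonoid.mem_closure_range_iff]
  constructor
  · rintro ⟨c, rfl⟩
    exact ⟨_, _, ⟨c, rfl, rfl⟩, weight_mul_pow_add_one_eq hb K c⟩
  · rintro ⟨_, _, ⟨c, rfl, rfl⟩, rfl⟩
    exact ⟨c, (weight_mul_pow_add_one_eq hb K c).symm⟩

theorem aperySet_closure_range_mul_pow_add_one (hb : 2 ≤ b) (hK : (K + 1).Coprime (b - 1)) :
    aperySet (AddSubmonoid.closure (Set.range fun j => K * b ^ j + 1)) (K + 1) =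
      {x | ∃ t : ℕ →₀ ℕ, IsGreedy b t ∧ weight (repunit b) t ≤ K ∧
        x = weight (fun j => K * b ^ j + 1) t} := by
  have hb0 : 0 < b := by omega
  have hlen : ∀ N < K + 1, repunitLength b N ≤ (b - 1) * K := fun N hN =>
    calc repunitLength b N ≤ N := repunitLength_le_self b N
      _ ≤ K := Nat.lt_succ_iff.1 hN
      _ ≤ (b - 1) * K := Nat.le_mul_of_pos_left K (by omega)
  rw [aperySet_eq_of_mem_iff K.succ_pos (hK.mul_right (by simp)) hlen
    (mem_closure_range_mul_pow_add_one_iff hb0)]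
  ext x
  constructor
  · rintro ⟨N, hN, rfl⟩
    obtain ⟨t, ht, rfl⟩ := exists_isGreedy_weight_eq hb0 N
    refine ⟨t, ht, Nat.lt_succ_iff.1 hN, ?_⟩
    rw [weight_mul_pow_add_one_eq hb0, ht.degree_eq_repunitLength hb0]
  · rintro ⟨t, ht, hN, rfl⟩
    refine ⟨_, Nat.lt_succ_of_le hN, ?_⟩
    rw [weight_mul_pow_add_one_eq hb0, ht.degree_eq_repunitLength hb0]

end Apery

section Thabit

variable {b n : ℕ}

theorem add_one_mul_pow_eq (hb : 0 < b) (n : ℕ) :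
    (b + 1) * b ^ n = (b - 1) * repunit b n + (b - 1) * repunit b (n + 1) + 2 := by
  have hn := pred_mul_repunit_add_one hb n
  have hn1 := pred_mul_repunit_add_one hb (n + 1)
  rw [pow_succ'] at hn1
  linarith

theorem coprime_add_one_mul_pow_add_one (hb : 2 ≤ b) (hb3 : b % 3 ≠ 1) (n : ℕ) :
    ((b + 1) * b ^ n + 1).Coprime (b - 1) := by
  have h3 : (b + 1) * b ^ n + 1 = 3 + (b - 1) * (repunit b n + repunit b (n + 1)) := by
    rw [add_one_mul_pow_eq (by omega)]
    ring
  rw [h3, Nat.coprime_add_mul_left_left, Nat.prime_three.coprime_iff_not_dvd]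
  omega

theorem thabitSemigroup2_eq_closure_range (b n : ℕ) :
    thabitSemigroup2 b n =
      AddSubmonoid.closure (Set.range fun j => (b + 1) * b ^ n * b ^ j + 1) := by
  simp only [thabitSemigroup2, Set.range, pow_add, mul_assoc, eq_comm]

theorem sum_mul_repunit_le_two_iff (hb : 2 ≤ b) (hn : 2 ≤ n) (t : ℕ → ℕ) :
    ∑ j ∈ range n, t j * repunit b j ≤ 2 ↔ t 1 ≤ 2 ∧ ∀ j, 2 ≤ j → j < n → t j = 0 := by
  have hsplit : ∑ j ∈ range n, t j * repunit b j = t 1 + ∑ j ∈ Ico 2 n, t j * repunit b j := by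
    rw [range_eq_Ico, sum_eq_sum_Ico_succ_bot (by omega), sum_eq_sum_Ico_succ_bot (by omega)]
    simp
  rw [hsplit]
  constructor
  · intro h
    refine ⟨by omega, fun j hj hjn => ?_⟩
    by_contra htj
    have := single_le_sum (f := fun j => t j * repunit b j) (fun _ _ => Nat.zero_le _)
      (mem_Ico.2 ⟨hj, hjn⟩)
    have := Nat.le_mul_of_pos_left (repunit b j) (Nat.pos_of_ne_zero htj)
    have := three_le_repunit hb hj
    omega
  · rintro ⟨h1, hzero⟩
    rw [sum_eq_zero fun j hj => by
      rw [hzero j (mem_Ico.1 hj).1 (mem_Ico.1 hj).2, zero_mul]]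
    exact h1

theorem IsGreedy.sum_mul_repunit_le_iff {t : ℕ → ℕ} (hb : 2 ≤ b) (hn : 2 ≤ n)
    (ht : IsGreedy b t) :
    ∑ j ∈ range (n + 2), t j * repunit b j ≤ (b + 1) * b ^ n ↔
      t (n + 1) ≤ b - 1 ∧ (t (n + 1) = b - 1 → t n ≤ b - 1) ∧
        (t n = b - 1 → t (n + 1) = b - 1 → ∑ j ∈ range n, t j * repunit b j ≤ 2) := by
  have hlow := ht.sum_mul_repunit_lt (k := n) (by omega)
  have hmid := ht.sum_mul_repunit_lt (k := n + 1) n.succ_pos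
  have hr := three_le_repunit hb hn
  have hr1 := repunit_succ b n
  have hpred (r : ℕ) : b * r = (b - 1) * r + r := by
    rw [← Nat.succ_mul, Nat.succ_eq_add_one, Nat.sub_add_cancel (by omega)]
  have hdigit (i r : ℕ) : t i < b - 1 ∧ t i * r + r ≤ (b - 1) * r ∨ t i = b - 1 ∨ t i = b := by
    rcases (ht.le i).lt_or_eq with h | h
    · refine (Nat.le_sub_one_of_lt h).lt_or_eq.imp (fun h => ⟨h, ?_⟩) .inl
      exact Nat.succ_mul (t i) r ▸ Nat.mul_le_mul_right r h
    · exact .inr (.inr h)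
  rw [add_one_mul_pow_eq (by omega), sum_range_succ, sum_range_succ]
  rw [sum_range_succ] at hmid
  rw [hpred] at hr1
  rcases hdigit (n + 1) (repunit b (n + 1)) with ⟨htop, hmul⟩ | htop | htop
  · exact iff_of_true (by omega) (by omega)
  · rw [htop]
    rcases hdigit n (repunit b n) with ⟨hnext, hmul⟩ | hnext | hnext
    · exact iff_of_true (by omega) (by omega)
    · rw [hnext]
      omega
    · rw [hnext, hpred]
      exact iff_of_false (by omega) (by omega)
  · rw [htop, hpred]
    exact iff_of_false (by omega) (by omega)

theorem add_one_mul_pow_lt_repunit (hb : 2 ≤ b) (hn : 2 ≤ n) :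
    (b + 1) * b ^ n < repunit b (n + 2) := by
  have hpos := three_le_repunit hb hn
  obtain ⟨a, rfl⟩ := Nat.exists_eq_add_of_le' (show 1 ≤ b by omega)
  rw [add_one_mul_pow_eq (by omega), repunit_succ _ (n + 1), repunit_succ, Nat.add_sub_cancel]
  linarith

open Finsupp

theorem support_subset_range_of_weight_repunit_lt {t : ℕ →₀ ℕ} {k : ℕ}
    (h : weight (repunit b) t < repunit b k) : t.support ⊆ range k := fun j hj => by
  by_contra! hkj
  have hle : repunit b j ≤ weight (repunit b) t :=
    le_weight_of_ne_zero' _ (mem_support_iff.1 hj)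
  exact ((monotone_repunit b (not_lt.1 fun hj' => hkj (mem_range.2 hj'))).trans hle).not_gt h

theorem Rb'.support_subset {t : ℕ →₀ ℕ} (ht : Rb' b n t) : t.support ⊆ Icc 1 (n + 1) :=
  fun j hj => by_contra fun hj' => mem_support_iff.1 hj (ht.2.1 j hj')

theorem Rb'.exists_finsupp {t : ℕ → ℕ} (ht : Rb' b n t) : ∃ c : ℕ →₀ ℕ, ⇑c = t :=
  ⟨onFinset (Icc 1 (n + 1)) t fun j hj => by_contra fun hj' => hj (ht.2.1 j hj'), rfl⟩

theorem rb'_iff_isGreedy_and_weight_le (hb : 2 ≤ b) (hn : 2 ≤ n) (t : ℕ →₀ ℕ) :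
    Rb' b n t ↔ IsGreedy b t ∧ weight (repunit b) t ≤ (b + 1) * b ^ n := by
  constructor
  · intro h
    have hsub : t.support ⊆ range (n + 2) := fun j hj => by
      have := mem_Icc.1 (h.support_subset hj)
      exact mem_range.2 (by omega)
    obtain ⟨hle, hsupp, hzero, htop, hnext, hboth⟩ := h
    have ht : IsGreedy b t := ⟨hsupp 0 (by simp), hle, fun hi hj => hzero _ hi _ hj⟩
    refine ⟨ht, ?_⟩
    rw [weight_eq_sum_of_support_subset _ hsub, ht.sum_mul_repunit_le_iff hb hn]
    refine ⟨htop, hnext, fun h1 h2 => (sum_mul_repunit_le_two_iff hb hn t).2 ?_⟩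
    exact ⟨(hboth h1 h2).1, fun j _ _ => (hboth h1 h2).2 j (by omega) (by omega) (by omega)⟩
  · rintro ⟨ht, hw⟩
    have hsub : t.support ⊆ range (n + 2) := support_subset_range_of_weight_repunit_lt
      (hw.trans_lt (add_one_mul_pow_lt_repunit hb hn))
    have hbig : ∀ j, n + 2 ≤ j → t j = 0 := fun j hj =>
      notMem_support_iff.1 fun hj' => (mem_range.1 (hsub hj')).not_ge hj
    rw [weight_eq_sum_of_support_subset _ hsub, ht.sum_mul_repunit_le_iff hb hn,
      sum_mul_repunit_le_two_iff hb hn] at hw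
    obtain ⟨htop, hnext, hboth⟩ := hw
    refine ⟨ht.le, fun j hj => ?_, fun i hi j hj => ht.eq_zero_of_lt hi hj, htop, hnext,
      fun h1 h2 => ⟨(hboth h1 h2).1, fun i hi1 hin hin1 => ?_⟩⟩
    · obtain rfl | hj : j = 0 ∨ n + 2 ≤ j := by
        rw [mem_Icc] at hj
        omega
      exacts [ht.zero, hbig j hj]
    · rcases Nat.lt_trichotomy i 1 with hi | hi | hi
      · rw [Nat.lt_one_iff.1 hi, ht.zero]
      · exact absurd hi hi1
      · rcases lt_or_ge i (n + 2) with hi' | hi'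
        exacts [(hboth h1 h2).2 i hi (by omega), hbig i hi']

theorem exists_rb'_sum_iff (hb : 2 ≤ b) (hn : 2 ≤ n) (w : ℕ → ℕ) (x : ℕ) :
    (∃ t, Rb' b n t ∧ x = ∑ j ∈ Icc 1 (n + 1), t j * w j) ↔
      ∃ t : ℕ →₀ ℕ, IsGreedy b t ∧ weight (repunit b) t ≤ (b + 1) * b ^ n ∧ x = weight w t := by
  simp only [← and_assoc, ← rb'_iff_isGreedy_and_weight_le hb hn]
  constructor
  · rintro ⟨t, ht, rfl⟩
    obtain ⟨c, rfl⟩ := ht.exists_finsupp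
    exact ⟨c, ht, (weight_eq_sum_of_support_subset w ht.support_subset).symm⟩
  · rintro ⟨t, ht, rfl⟩
    exact ⟨t, ht, weight_eq_sum_of_support_subset w ht.support_subset⟩

end Thabit

theorem thabit2_apery_set (n b : ℕ) (hn : 2 ≤ n) (hb : 2 ≤ b) (hb3 : b % 3 ≠ 1) :
    {s : ℕ | s ∈ thabitSemigroup2 b n ∧
        ¬ ∃ t ∈ thabitSemigroup2 b n, t + ((b + 1) * b ^ n + 1) = s}
      = {x : ℕ | ∃ t : ℕ → ℕ, Rb' b n t ∧
          x = ∑ j ∈ Finset.Icc 1 (n + 1), t j * ((b + 1) * b ^ (n + j) + 1)} := by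
  change aperySet (thabitSemigroup2 b n) ((b + 1) * b ^ n + 1) = _
  rw [thabitSemigroup2_eq_closure_range, aperySet_closure_range_mul_pow_add_one hb
    (coprime_add_one_mul_pow_add_one hb hb3 n)]
  ext x
  simp only [Set.mem_ofPred_eq, pow_add, ← mul_assoc]
  exact (exists_rb'_sum_iff hb hn (fun j => (b + 1) * b ^ n * b ^ j + 1) x).symm
end

section
/- Let n and b be natural numbers with n ≥ 2, b even and b ≥ 2. Then the genus of SC⁺(b,n), i.e., the cardinality of ℕ \ SC⁺(b,n), equals b + (b^(2n)·(b−1) + b^n·(b·n − n − 1))/2. -/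
/-- The Cunningham numerical semigroup: the additive submonoid of ℕ generated by
`{b^(n+i) + 1 : i ∈ ℕ}`. -/
def cunninghamSemigroup (b n : ℕ) : AddSubmonoid ℕ :=
  AddSubmonoid.closure {m : ℕ | ∃ i : ℕ, m = b ^ (n + i) + 1}

/-!
Write `L y = ∑_{j ≥ 1} ⌊y / b ^ j⌋`. Starting from `y = 1 + ⋯ + 1` and repeatedly merging `b` equal
powers of `b` into the next one, each merge lowers the number of summands by `b - 1`, and `L y` is
the largest possible number of merges. So `y` is a sum of exactly `w` powers of `b` if and only if
`w = y - (b - 1) t` with `t ≤ L y`. A sum of `w` generators has the form `b ^ n * y + w` with `y` a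
sum of `w` powers of `b`, so the semigroup consists of the numbers `(b ^ n + 1) y - (b - 1) t` with
`t ≤ L y`.

As `b` is even, `b - 1` is invertible modulo `b ^ n + 1`, and `t = 0, …, b ^ n` parametrizes the
residue classes. The least element of the semigroup in the class of `t` belongs to the least `y`
with `t ≤ L y`, say `ℓ t`. Selmer's formula thus reduces the genus to `∑ ℓ t`. Since `ℓ` and `L`
form a Galois connection, the areas `∑ ℓ t` and `∑ L y` add up to a rectangle, and `∑ L y` follows
from the recursion `L (b x + r) = x + L x`, valid for `r < b`.
-/

open Finset

/-- `w` enumerates over `s` the Apéry set of `A` with respect to `m`: each residue class modulo `m`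
contains exactly one of the values `w i`, and `A` meets that class in its elements from `w i` on.
The family is indexed by an arbitrary finset instead of by residues, so that a convenient
parametrization of the classes can be used. -/
structure IsAperyFamily {ι : Type*} (A : Set ℕ) (m : ℕ) (s : Finset ι) (w : ι → ℕ) : Prop where
  card_eq : #s = m
  injOn_mod : Set.InjOn (fun i => w i % m) s
  mem_iff : ∀ i ∈ s, ∀ x, x ≡ w i [MOD m] → (x ∈ A ↔ w i ≤ x)

theorem lt_iff_div_lt_div_of_modEq {m x y : ℕ} (hm : 0 < m) (h : x ≡ y [MOD m]) :
    x < y ↔ x / m < y / m := by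
  calc x < y ↔ m * (x / m) + x % m < m * (y / m) + y % m := by simp only [Nat.div_add_mod]
    _ ↔ x / m < y / m := by
      rw [show x % m = y % m from h, Nat.add_lt_add_iff_right, Nat.mul_lt_mul_left hm]

namespace IsAperyFamily

variable {ι : Type*} {A : Set ℕ} {m : ℕ} {s : Finset ι} {w : ι → ℕ}

theorem image_mod_eq_range (h : IsAperyFamily A m s w) (hm : 0 < m) :
    s.image (fun i => w i % m) = range m := by
  refine eq_of_subset_of_card_le (image_subset_iff.mpr fun i _ => ?_) ?_
  · exact mem_range.mpr (Nat.mod_lt _ hm)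
  · rw [card_image_of_injOn h.injOn_mod, h.card_eq, card_range]

theorem ncard_compl_eq_sum_div (h : IsAperyFamily A m s w) (hm : 0 < m) :
    Aᶜ.ncard = ∑ i ∈ s, w i / m := by
  have hcard : ∑ i ∈ s, w i / m = #(s.sigma fun i => range (w i / m)) := by simp
  have hmodEq (i k) : w i % m + m * k ≡ w i [MOD m] := by
    simp [Nat.ModEq]
  have hdiv (i k) : (w i % m + m * k) / m = k := by
    rw [Nat.add_mul_div_left _ _ hm, Nat.mod_div_self, zero_add]
  rw [hcard, ← Set.ncard_coe_finset]
  refine (Set.ncard_congr (fun p _ => w p.1 % m + m * p.2) ?_ ?_ ?_).symm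
  · rintro ⟨i, k⟩ hik
    obtain ⟨hi, hk⟩ : i ∈ s ∧ k < w i / m := by simpa using hik
    rw [Set.mem_compl_iff, h.mem_iff i hi _ (hmodEq i k), not_le,
      lt_iff_div_lt_div_of_modEq hm (hmodEq i k), hdiv]
    exact hk
  · rintro ⟨i, k⟩ ⟨j, l⟩ hik hjl (heq : w i % m + m * k = w j % m + m * l)
    obtain ⟨hi, -⟩ : i ∈ s ∧ k < w i / m := by simpa using hik
    obtain ⟨hj, -⟩ : j ∈ s ∧ l < w j / m := by simpa using hjl
    obtain rfl : i = j := h.injOn_mod hi hj ((hmodEq i k).symm.trans (heq ▸ hmodEq j l))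
    obtain rfl : k = l := by rw [← hdiv i k, heq, hdiv]
    rfl
  · intro x hx
    obtain ⟨i, hi, hix : w i % m = x % m⟩ := mem_image.mp <|
      (h.image_mod_eq_range hm).symm ▸ mem_range.mpr (x.mod_lt hm)
    rw [Set.mem_compl_iff, h.mem_iff i hi x hix.symm, not_le,
      lt_iff_div_lt_div_of_modEq hm hix.symm] at hx
    exact ⟨⟨i, x / m⟩, by simpa using ⟨hi, hx⟩, by simp only [hix, Nat.mod_add_div]⟩

/-- Selmer's formula for the number of gaps. -/
theorem two_mul_sum_eq (h : IsAperyFamily A m s w) :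
    2 * ∑ i ∈ s, w i = 2 * m * Aᶜ.ncard + m * (m - 1) := by
  rcases Nat.eq_zero_or_pos m with rfl | hm
  · simp [card_eq_zero.mp h.card_eq]
  have hmod : ∑ i ∈ s, w i % m = ∑ r ∈ range m, r := by
    rw [← h.image_mod_eq_range hm, sum_image h.injOn_mod]
  calc 2 * ∑ i ∈ s, w i = 2 * (m * ∑ i ∈ s, w i / m + ∑ i ∈ s, w i % m) := by
        simp only [mul_sum, ← sum_add_distrib, Nat.div_add_mod]
    _ = 2 * m * Aᶜ.ncard + m * (m - 1) := by
        rw [hmod, h.ncard_compl_eq_sum_div hm, ← sum_range_id_mul_two m]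
        ring

end IsAperyFamily

theorem sum_range_add_sum_range_of_galoisConnection {l u : ℕ → ℕ} (gc : GaloisConnection l u)
    {M N : ℕ} (hl : l M ≤ N) (hu : ∀ y < N, u y ≤ M) :
    ∑ t ∈ range (M + 1), l t + ∑ y ∈ range N, u y = N * M := by
  have hcard_l (t) (ht : t ∈ range (M + 1)) : #((range N).filter (fun y => u y < t)) = l t := by
    have hlt : l t ≤ N := (gc.monotone_l (Nat.lt_succ_iff.mp (mem_range.mp ht))).trans hl
    rw [show (range N).filter (fun y => u y < t) = range (l t) by
      ext y; have := gc t y; grind, card_range]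
  have hcard_u (y) (hy : y ∈ range N) :
      #((range (M + 1)).filter (fun t => u y < t)) + u y = M := by
    have huy := hu y (mem_range.mp hy)
    rw [show (range (M + 1)).filter (fun t => u y < t) = Ioc (u y) M by ext t; grind,
      Nat.card_Ioc, Nat.sub_add_cancel huy]
  calc ∑ t ∈ range (M + 1), l t + ∑ y ∈ range N, u y
      = ∑ y ∈ range N, #((range (M + 1)).filter (fun t => u y < t)) + ∑ y ∈ range N, u y := by
        rw [← sum_congr rfl hcard_l]
        congr 1
        exact sum_card_bipartiteAbove_eq_sum_card_bipartiteBelow (fun t y => u y < t)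
    _ = N * M := by
        rw [← sum_add_distrib, sum_congr rfl hcard_u, sum_const, card_range, smul_eq_mul]

/-- The sum `∑_{j ≥ 1} ⌊y / b ^ j⌋` of Legendre's formula. The terms with `j > y` vanish for
`1 < b`, so a finite range suffices. -/
def legendreSum (b y : ℕ) : ℕ :=
  ∑ i ∈ range y, y / b ^ (i + 1)

section LegendreSum

variable {b n : ℕ}

theorem legendreSum_eq_sum_range (hb : 1 < b) {y N : ℕ} (h : y ≤ N) :
    legendreSum b y = ∑ i ∈ range N, y / b ^ (i + 1) := by
  refine sum_subset (range_mono h) fun i _ hi => Nat.div_eq_of_lt ?_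
  calc y ≤ i := by simpa using hi
    _ < i + 1 := i.lt_succ_self
    _ < b ^ (i + 1) := Nat.lt_pow_self hb

theorem legendreSum_add_le (hb : 1 < b) (x y : ℕ) :
    legendreSum b x + legendreSum b y ≤ legendreSum b (x + y) := by
  rw [legendreSum_eq_sum_range hb (Nat.le_add_right x y),
    legendreSum_eq_sum_range hb (Nat.le_add_left y x), legendreSum, ← sum_add_distrib]
  exact sum_le_sum fun _ _ => Nat.div_add_div_le_add_div

theorem legendreSum_mono (hb : 1 < b) : Monotone (legendreSum b) := by
  intro x y hxy
  obtain ⟨d, rfl⟩ := Nat.exists_eq_add_of_le hxy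
  exact (Nat.le_add_right _ _).trans (legendreSum_add_le hb x d)

theorem legendreSum_mul_add (hb : 1 < b) (x : ℕ) {r : ℕ} (hr : r < b) :
    legendreSum b (b * x + r) = x + legendreSum b x := by
  have hdiv : (b * x + r) / b = x := by
    rw [Nat.mul_add_div (by lia), Nat.div_eq_of_lt hr, add_zero]
  have hx : x ≤ b * x + r := by nlinarith
  rw [legendreSum_eq_sum_range hb (Nat.le_succ (b * x + r)), sum_range_succ', add_comm,
    legendreSum_eq_sum_range hb hx]
  simp only [pow_succ' b (_ + 1), ← Nat.div_div_eq_div_mul, hdiv, zero_add, pow_one]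

theorem legendreSum_mul (hb : 1 < b) (x : ℕ) : legendreSum b (b * x) = x + legendreSum b x :=
  legendreSum_mul_add hb x (Nat.zero_lt_of_lt hb)

theorem legendreSum_eq_zero_of_lt {r : ℕ} (hr : r < b) : legendreSum b r = 0 :=
  sum_eq_zero fun i _ => Nat.div_eq_of_lt (hr.trans_le (Nat.le_self_pow i.succ_ne_zero b))

theorem pred_mul_legendreSum_le (hb : 1 < b) (y : ℕ) : (b - 1) * legendreSum b y ≤ y := by
  have hIco : legendreSum b y = ∑ i ∈ Ico 1 (y + 1), y / b ^ i := by
    rw [sum_Ico_eq_sum_range, legendreSum]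
    simp only [Nat.add_sub_cancel, add_comm 1]
  calc (b - 1) * legendreSum b y ≤ (b - 1) * (y / (b - 1)) :=
        Nat.mul_le_mul_left _ (hIco ▸ Nat.geom_sum_Ico_le hb y (y + 1))
    _ ≤ y := Nat.mul_div_le y (b - 1)

theorem pred_mul_legendreSum_pow_mul (hb : 1 < b) (n x : ℕ) :
    (b - 1) * legendreSum b (b ^ n * x) + x = b ^ n * x + (b - 1) * legendreSum b x := by
  obtain ⟨c, rfl⟩ := Nat.exists_eq_add_of_le' hb.le
  rw [Nat.add_sub_cancel]
  induction n with
  | zero => rw [pow_zero, one_mul, add_comm]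
  | succ n ih =>
    rw [pow_succ', mul_assoc, legendreSum_mul hb]
    linarith

theorem legendreSum_pow_mul_pred_add_one (hb : 1 < b) (n : ℕ) :
    legendreSum b (b ^ n * (b - 1)) + 1 = b ^ n := by
  have h := pred_mul_legendreSum_pow_mul hb n (b - 1)
  rw [legendreSum_eq_zero_of_lt (Nat.sub_one_lt_of_lt hb), mul_zero, add_zero, mul_comm (b ^ n),
    ← Nat.mul_add_one] at h
  rw [mul_comm (b ^ n)]
  exact Nat.eq_of_mul_eq_mul_left (Nat.sub_pos_of_lt hb) h

theorem sum_range_mul_legendreSum (hb : 1 < b) (N : ℕ) :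
    ∑ y ∈ range (b * N), legendreSum b y = b * ∑ x ∈ range N, (x + legendreSum b x) := by
  induction N with
  | zero => simp
  | succ N ih =>
    have hblock : ∑ r ∈ range b, legendreSum b (b * N + r) = b * (N + legendreSum b N) := by
      rw [sum_congr rfl fun r hr => legendreSum_mul_add hb N (mem_range.mp hr)]
      simp
    rw [Nat.mul_add_one, sum_range_add, ih, hblock, ← mul_add, sum_range_succ]

theorem two_mul_sum_range_pow_mul_pred_legendreSum (hb : 1 < b) (n : ℕ) :
    2 * ∑ y ∈ range (b ^ n * (b - 1)), legendreSum b y + (n + 1) * (b ^ n * (b - 1))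
      = b ^ (2 * n) * (b - 1) := by
  induction n with
  | zero =>
    have hzero : ∑ y ∈ range (b - 1), legendreSum b y = 0 :=
      sum_eq_zero fun y hy => legendreSum_eq_zero_of_lt (by grind)
    simp [hzero]
  | succ n ih =>
    set N := b ^ n * (b - 1) with hN
    have hgauss : 2 * ∑ x ∈ range N, x + N = N * N := by
      rw [mul_comm 2, sum_range_id_mul_two, Nat.mul_sub_one, Nat.sub_add_cancel N.le_mul_self]
    have hNN : N * N = b ^ (2 * n) * (b - 1) * (b - 1) := by rw [hN]; ring
    rw [pow_succ', mul_assoc, ← hN, sum_range_mul_legendreSum hb, sum_add_distrib]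
    have hb1 : (b - 1) + 1 = b := by lia
    calc 2 * (b * (∑ x ∈ range N, x + ∑ x ∈ range N, legendreSum b x)) + (n + 1 + 1) * (b * N)
        = b * ((2 * ∑ x ∈ range N, x + N)
          + (2 * ∑ x ∈ range N, legendreSum b x + (n + 1) * N)) := by ring
      _ = b * (b ^ (2 * n) * (b - 1) * ((b - 1) + 1)) := by rw [hgauss, ih, hNN]; ring
      _ = b ^ (2 * (n + 1)) * (b - 1) := by rw [hb1]; ring

/-- The least `y` with `t ≤ legendreSum b y`. Such `y` exist as soon as `1 < b`; otherwise the
infimum may be that of the empty set. -/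
noncomputable def legendreInv (b t : ℕ) : ℕ :=
  sInf {y | t ≤ legendreSum b y}

theorem gc_legendreInv_legendreSum (hb : 1 < b) :
    GaloisConnection (legendreInv b) (legendreSum b) := by
  intro t y
  have hne : {z | t ≤ legendreSum b z}.Nonempty := ⟨b * t, by simp [legendreSum_mul hb]⟩
  exact ⟨fun h => (Nat.sInf_mem hne).trans (legendreSum_mono hb h), fun h => Nat.sInf_le h⟩

theorem legendreSum_pow_mul_pred_add (hb : 1 < b) (hn : n ≠ 0) {r : ℕ} (hr : r < b) :
    legendreSum b (b ^ n * (b - 1) + r) + 1 = b ^ n := by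
  obtain ⟨k, rfl⟩ := Nat.exists_eq_add_one_of_ne_zero hn
  have h := legendreSum_pow_mul_pred_add_one hb (k + 1)
  rw [pow_succ', mul_assoc, legendreSum_mul hb] at h
  rw [pow_succ', mul_assoc, legendreSum_mul_add hb _ hr, h]

theorem legendreInv_pow_le (hb : 1 < b) (n : ℕ) :
    legendreInv b (b ^ n) ≤ b ^ n * (b - 1) + b := by
  have hbase : 1 ≤ legendreSum b b := by
    simpa using (Nat.le_add_right 1 (legendreSum b 1)).trans_eq (legendreSum_mul hb 1).symm
  rw [gc_legendreInv_legendreSum hb (b ^ n)]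
  calc b ^ n = legendreSum b (b ^ n * (b - 1)) + 1 :=
        (legendreSum_pow_mul_pred_add_one hb n).symm
    _ ≤ legendreSum b (b ^ n * (b - 1)) + legendreSum b b := Nat.add_le_add_left hbase _
    _ ≤ legendreSum b (b ^ n * (b - 1) + b) := legendreSum_add_le hb _ _

theorem two_mul_sum_legendreInv (hb : 1 < b) (hn : n ≠ 0) :
    2 * ∑ t ∈ range (b ^ n + 1), legendreInv b t
      = b ^ (2 * n) * (b - 1) + (n + 1) * (b ^ n * (b - 1)) + 2 * b := by
  have hle (y) (hy : y < b ^ n * (b - 1) + b) : legendreSum b y ≤ b ^ n := by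
    calc legendreSum b y ≤ legendreSum b (b ^ n * (b - 1) + (b - 1)) :=
          legendreSum_mono hb (by lia)
      _ ≤ b ^ n := (Nat.le_succ _).trans_eq <|
          legendreSum_pow_mul_pred_add hb hn (Nat.sub_one_lt_of_lt hb)
  have hrect := sum_range_add_sum_range_of_galoisConnection (gc_legendreInv_legendreSum hb)
    (legendreInv_pow_le hb n) hle
  have htail : ∑ r ∈ range b, legendreSum b (b ^ n * (b - 1) + r) + b = b * b ^ n := by
    calc ∑ r ∈ range b, legendreSum b (b ^ n * (b - 1) + r) + b
        = ∑ r ∈ range b, (legendreSum b (b ^ n * (b - 1) + r) + 1) := by simp [sum_add_distrib]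
      _ = b * b ^ n := by
          rw [sum_congr rfl fun r hr => legendreSum_pow_mul_pred_add hb hn (mem_range.mp hr)]
          simp
  rw [sum_range_add (legendreSum b)] at hrect
  have hhead := two_mul_sum_range_pow_mul_pred_legendreSum hb n
  have hsq : b ^ (2 * n) = b ^ n * b ^ n := by rw [two_mul, pow_add]
  rw [hsq] at hhead ⊢
  linear_combination 2 * hrect - 2 * htail - hhead

end LegendreSum

/-- The pairs `(y, w)` such that `y` is a sum of exactly `w` powers of `b`. -/
def powerSums (b : ℕ) : AddSubmonoid (ℕ × ℕ) :=
  AddSubmonoid.closure (Set.range fun i => (b ^ i, 1))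

section PowerSums

variable {b : ℕ}

theorem one_one_mem_powerSums (b : ℕ) : (1, 1) ∈ powerSums b :=
  AddSubmonoid.subset_closure ⟨0, by simp⟩

theorem base_one_mem_powerSums (b : ℕ) : (b, 1) ∈ powerSums b :=
  AddSubmonoid.subset_closure ⟨1, by simp⟩

theorem mul_left_mem_powerSums {p : ℕ × ℕ} (hp : p ∈ powerSums b) :
    (b * p.1, p.2) ∈ powerSums b := by
  induction hp using AddSubmonoid.closure_induction with
  | mem p hp =>
    obtain ⟨i, rfl⟩ := hp
    exact AddSubmonoid.subset_closure ⟨i + 1, by simp [pow_succ']⟩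
  | zero => exact zero_mem _
  | add p q _ _ hp hq => simpa [mul_add] using add_mem hp hq

theorem exists_le_legendreSum_of_mem_powerSums (hb : 1 < b) {p : ℕ × ℕ} (hp : p ∈ powerSums b) :
    ∃ t ≤ legendreSum b p.1, p.2 + (b - 1) * t = p.1 := by
  induction hp using AddSubmonoid.closure_induction with
  | mem p hp =>
    obtain ⟨i, rfl⟩ := hp
    refine ⟨_, le_rfl, ?_⟩
    simpa [legendreSum_eq_zero_of_lt hb, add_comm] using pred_mul_legendreSum_pow_mul hb i 1
  | zero => exact ⟨0, by simp⟩
  | add p q _ _ hp hq =>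
    obtain ⟨t, ht, hpt⟩ := hp
    obtain ⟨u, hu, hqu⟩ := hq
    refine ⟨t + u, (add_le_add ht hu).trans (legendreSum_add_le hb _ _), ?_⟩
    rw [Prod.fst_add, Prod.snd_add, ← hpt, ← hqu]
    ring

theorem mem_powerSums_of_mul_le (hb : 1 < b) {y w t : ℕ} (ht : b * t ≤ y)
    (hw : w + (b - 1) * t = y) : (y, w) ∈ powerSums b := by
  obtain ⟨d, rfl⟩ := Nat.exists_eq_add_of_le ht
  have hwd : w = t + d := by
    have := Nat.sub_one_add_one_eq_of_pos (Nat.zero_lt_of_lt hb)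
    grind
  have h := add_mem (nsmul_mem (base_one_mem_powerSums b) t) (nsmul_mem (one_one_mem_powerSums b) d)
  simpa [hwd, mul_comm] using h

theorem mem_powerSums_of_le_legendreSum (hb : 1 < b) {y w t : ℕ} (ht : t ≤ legendreSum b y)
    (hw : w + (b - 1) * t = y) : (y, w) ∈ powerSums b := by
  induction y using Nat.strong_induction_on generalizing w t with
  | _ y ih =>
    obtain ⟨q, r, hr, rfl⟩ : ∃ q r, r < b ∧ y = b * q + r :=
      ⟨y / b, y % b, Nat.mod_lt y (by lia), (Nat.div_add_mod y b).symm⟩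
    -- Of the `t` merges of `b` equal powers, the first `q` merge ones into copies of `b`; the
    -- others take place inside `b * q`, as `b` times merges inside `q`.
    rcases le_or_gt t q with htq | hqt
    · exact mem_powerSums_of_mul_le hb (by nlinarith) hw
    · obtain ⟨u, rfl⟩ := Nat.exists_eq_add_of_le hqt.le
      rw [legendreSum_mul_add hb q hr] at ht
      have hu : u ≤ legendreSum b q := by lia
      have hq : 0 < q := by
        by_contra! hq
        obtain rfl : q = 0 := by lia
        rw [legendreSum_eq_zero_of_lt (by lia)] at hu
        lia
      have hvu : q - (b - 1) * u + (b - 1) * u = q := Nat.sub_add_cancel <|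
        (Nat.mul_le_mul_left _ hu).trans (pred_mul_legendreSum_le hb q)
      have hwv : w = q - (b - 1) * u + r := by
        have := Nat.sub_one_mul b q
        have : q ≤ b * q := by nlinarith
        rw [mul_add] at hw
        lia
      have h := add_mem (mul_left_mem_powerSums (ih q (by nlinarith) hu hvu))
        (nsmul_mem (one_one_mem_powerSums b) r)
      simpa [hwv] using h

theorem mem_powerSums_iff (hb : 1 < b) {y w : ℕ} :
    (y, w) ∈ powerSums b ↔ ∃ t ≤ legendreSum b y, w + (b - 1) * t = y :=
  ⟨exists_le_legendreSum_of_mem_powerSums hb, fun ⟨_, ht, hw⟩ =>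
    mem_powerSums_of_le_legendreSum hb ht hw⟩

end PowerSums

theorem mem_cunninghamSemigroup_iff_powerSums {b n x : ℕ} :
    x ∈ cunninghamSemigroup b n ↔ ∃ y w, (y, w) ∈ powerSums b ∧ b ^ n * y + w = x := by
  have hmap : cunninghamSemigroup b n = (powerSums b).map
      ((AddMonoidHom.mulLeft (b ^ n)).coprod (AddMonoidHom.id ℕ)) := by
    rw [powerSums, AddMonoidHom.map_mclosure, ← Set.range_comp, cunninghamSemigroup]
    congr 1
    ext x
    simp [pow_add, eq_comm]
  simp [hmap]

theorem mem_cunninghamSemigroup_iff {b : ℕ} (hb : 1 < b) {n x : ℕ} :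
    x ∈ cunninghamSemigroup b n ↔
      ∃ y, ∃ t ≤ legendreSum b y, x + (b - 1) * t = (b ^ n + 1) * y := by
  simp only [mem_cunninghamSemigroup_iff_powerSums, mem_powerSums_iff hb]
  constructor
  · rintro ⟨y, w, ⟨t, ht, hw⟩, rfl⟩
    exact ⟨y, t, ht, by rw [add_assoc, hw, Nat.add_one_mul]⟩
  · rintro ⟨y, t, ht, hx⟩
    have hty : (b - 1) * t ≤ y :=
      (Nat.mul_le_mul_left _ ht).trans (pred_mul_legendreSum_le hb y)
    refine ⟨y, y - (b - 1) * t, ⟨t, ht, Nat.sub_add_cancel hty⟩, ?_⟩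
    rw [Nat.add_one_mul] at hx
    lia

theorem coprime_pow_add_one_pred {b : ℕ} (hb : b ≠ 0) (hbe : Even b) (n : ℕ) :
    Nat.Coprime (b ^ n + 1) (b - 1) := by
  have hodd : Odd (b - 1) := Nat.Even.sub_odd (Nat.one_le_iff_ne_zero.mpr hb) hbe odd_one
  have hmod : b ^ n + 1 ≡ 2 [MOD b - 1] := by
    simpa using ((Nat.modEq_sub (Nat.one_le_iff_ne_zero.mpr hb)).pow n).add_right 1
  rw [Nat.Coprime, hmod.gcd_eq]
  exact Nat.coprime_two_left.mpr hodd

theorem exists_eq_add_mul_of_coprime {m c x y z t u : ℕ} (hco : Nat.Coprime m c) (ht : t < m)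
    (hy : x + c * t = m * y) (hz : x + c * u = m * z) : ∃ k, u = t + m * k ∧ z = y + c * k := by
  have hmod : t ≡ u [MOD m] := by
    refine Nat.ModEq.cancel_left_of_coprime hco (Nat.ModEq.add_left_cancel' x ?_)
    rw [hy, hz, Nat.ModEq, Nat.mul_mod_right, Nat.mul_mod_right]
  have htu : t ≤ u := by
    rw [← Nat.mod_eq_of_lt ht, hmod]
    exact Nat.mod_le u m
  obtain ⟨k, hk⟩ := (Nat.modEq_iff_dvd' htu).mp hmod
  obtain rfl : u = t + m * k := by lia
  refine ⟨k, rfl, Nat.eq_of_mul_eq_mul_left (Nat.zero_lt_of_lt ht) ?_⟩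
  rw [← hz, mul_add m y, ← hy]
  ring

section Cunningham

variable {b n : ℕ}

theorem mul_le_of_add_mul_le_legendreSum (hb : 1 < b) {y t k : ℕ} (hk : k ≠ 0) (ht : t ≤ b ^ n)
    (hle : t + (b ^ n + 1) * k ≤ legendreSum b (y + (b - 1) * k)) : b * t ≤ y := by
  obtain ⟨c, rfl⟩ := Nat.exists_eq_add_of_le' hb.le
  rw [Nat.add_sub_cancel] at hle
  have hbound : c * (t + ((c + 1) ^ n + 1) * k) ≤ y + c * k :=
    (Nat.mul_le_mul_left c hle).trans (pred_mul_legendreSum_le hb _)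
  have htk : t ≤ c * ((c + 1) ^ n * k) :=
    calc t ≤ (c + 1) ^ n * k := ht.trans (Nat.le_mul_of_pos_right _ (Nat.pos_of_ne_zero hk))
      _ ≤ c * ((c + 1) ^ n * k) := Nat.le_mul_of_pos_left _ (Nat.lt_of_succ_lt_succ hb)
  linarith

theorem mem_cunninghamSemigroup_iff_le_legendreSum (hb : 1 < b)
    (hco : Nat.Coprime (b ^ n + 1) (b - 1)) {x y t : ℕ} (ht : t ≤ b ^ n)
    (hx : x + (b - 1) * t = (b ^ n + 1) * y) :
    x ∈ cunninghamSemigroup b n ↔ t ≤ legendreSum b y := by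
  rw [mem_cunninghamSemigroup_iff hb]
  refine ⟨?_, fun hty => ⟨y, t, hty, hx⟩⟩
  rintro ⟨z, u, hu, hxz⟩
  obtain ⟨k, rfl, rfl⟩ := exists_eq_add_mul_of_coprime hco (Nat.lt_succ_of_le ht) hx hxz
  rcases eq_or_ne k 0 with rfl | hk
  · simpa using hu
  · calc t ≤ legendreSum b (b * t) := by simp [legendreSum_mul hb]
      _ ≤ legendreSum b y := legendreSum_mono hb (mul_le_of_add_mul_le_legendreSum hb hk ht hu)

/-- The least element of `cunninghamSemigroup b n` congruent to `-(b - 1) * t` modulo `b ^ n + 1`,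
when `1 < b`, `t ≤ b ^ n` and `b - 1` is coprime to `b ^ n + 1`. The subtraction does not truncate
for `1 < b`, see `cunninghamApery_add`. -/
noncomputable def cunninghamApery (b n t : ℕ) : ℕ :=
  (b ^ n + 1) * legendreInv b t - (b - 1) * t

theorem cunninghamApery_add (hb : 1 < b) (n t : ℕ) :
    cunninghamApery b n t + (b - 1) * t = (b ^ n + 1) * legendreInv b t := by
  refine Nat.sub_add_cancel ?_
  calc (b - 1) * t ≤ (b - 1) * legendreSum b (legendreInv b t) :=
        Nat.mul_le_mul_left _ ((gc_legendreInv_legendreSum hb).le_u_l t)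
    _ ≤ legendreInv b t := pred_mul_legendreSum_le hb _
    _ ≤ (b ^ n + 1) * legendreInv b t := Nat.le_mul_of_pos_left _ (Nat.succ_pos _)

theorem mem_cunninghamSemigroup_iff_cunninghamApery_le (hb : 1 < b)
    (hco : Nat.Coprime (b ^ n + 1) (b - 1)) {x t : ℕ} (ht : t ≤ b ^ n)
    (hx : x ≡ cunninghamApery b n t [MOD b ^ n + 1]) :
    x ∈ cunninghamSemigroup b n ↔ cunninghamApery b n t ≤ x := by
  obtain ⟨y, hy⟩ : b ^ n + 1 ∣ x + (b - 1) * t := by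
    rw [(hx.add_right _).dvd_iff dvd_rfl, cunninghamApery_add hb]
    exact dvd_mul_right _ _
  rw [mem_cunninghamSemigroup_iff_le_legendreSum hb hco ht hy, ← gc_legendreInv_legendreSum hb t y,
    ← Nat.mul_le_mul_left_iff (Nat.succ_pos (b ^ n)), Nat.succ_eq_add_one, ← hy,
    ← cunninghamApery_add hb, Nat.add_le_add_iff_right]

theorem injOn_cunninghamApery_mod (hb : 1 < b) (hco : Nat.Coprime (b ^ n + 1) (b - 1)) :
    Set.InjOn (fun t => cunninghamApery b n t % (b ^ n + 1)) (range (b ^ n + 1)) := by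
  intro t ht u hu (htu : cunninghamApery b n t ≡ cunninghamApery b n u [MOD b ^ n + 1])
  have hmul : (b - 1) * t ≡ (b - 1) * u [MOD b ^ n + 1] := by
    refine htu.add_left_cancel ?_
    rw [cunninghamApery_add hb, cunninghamApery_add hb, Nat.ModEq, Nat.mul_mod_right,
      Nat.mul_mod_right]
  exact (hmul.cancel_left_of_coprime hco).eq_of_lt_of_lt (by simpa using ht) (by simpa using hu)

theorem isAperyFamily_cunninghamApery (hb : 1 < b) (hco : Nat.Coprime (b ^ n + 1) (b - 1)) :
    IsAperyFamily {m | m ∈ cunninghamSemigroup b n} (b ^ n + 1) (range (b ^ n + 1))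
      (cunninghamApery b n) where
  card_eq := card_range _
  injOn_mod := injOn_cunninghamApery_mod hb hco
  mem_iff _ ht _ hx := mem_cunninghamSemigroup_iff_cunninghamApery_le hb hco
    (Nat.lt_succ_iff.mp (mem_range.mp ht)) hx

theorem two_mul_ncard_notMem_cunninghamSemigroup (hb : 1 < b)
    (hco : Nat.Coprime (b ^ n + 1) (b - 1)) :
    2 * Set.ncard {m | m ∉ cunninghamSemigroup b n} + b ^ n * b
      = 2 * ∑ t ∈ range (b ^ n + 1), legendreInv b t := by
  have hselmer := (isAperyFamily_cunninghamApery hb hco).two_mul_sum_eq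
  have hsum : ∑ t ∈ range (b ^ n + 1), cunninghamApery b n t + (b - 1) * ∑ t ∈ range (b ^ n + 1), t
      = (b ^ n + 1) * ∑ t ∈ range (b ^ n + 1), legendreInv b t := by
    simp only [mul_sum, ← sum_add_distrib, cunninghamApery_add hb]
  have hgauss := sum_range_id_mul_two (b ^ n + 1)
  rw [Set.compl_ofPred, Nat.add_sub_cancel] at hselmer
  rw [Nat.add_sub_cancel] at hgauss
  refine Nat.eq_of_mul_eq_mul_left (show 0 < b ^ n + 1 by positivity) ?_
  obtain ⟨c, rfl⟩ := Nat.exists_eq_add_of_le' hb.le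
  rw [Nat.add_sub_cancel] at hsum
  linear_combination 2 * hsum - hselmer - c * hgauss

end Cunningham

theorem cunningham_genus_general (n b : ℕ) (hn : n ≠ 0) (hb : 2 ≤ b) (hbe : Even b) :
    2 * Set.ncard {m : ℕ | m ∉ cunninghamSemigroup b n}
      = 2 * b + b ^ (2 * n) * (b - 1) + b ^ n * (b * n - n - 1) := by
  have hgenus := two_mul_ncard_notMem_cunninghamSemigroup hb
    (coprime_pow_add_one_pred (by lia) hbe n)
  rw [two_mul_sum_legendreInv hb hn] at hgenus
  have hcoeff : (n + 1) * (b - 1) = (b * n - n - 1) + b := by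
    have hpos : 0 < (b - 1) * n := Nat.mul_pos (by lia) (Nat.pos_of_ne_zero hn)
    rw [Nat.sub_one_mul] at hpos
    rw [mul_comm, Nat.sub_one_mul, Nat.mul_add_one]
    lia
  linear_combination hgenus + b ^ n * hcoeff

theorem cunningham_genus (n b : ℕ) (hn : 2 ≤ n) (hb : 2 ≤ b) (hbe : Even b) :
    2 * Set.ncard {m : ℕ | m ∉ cunninghamSemigroup b n}
      = 2 * b + b ^ (2 * n) * (b - 1) + b ^ n * (b * n - n - 1) :=
  cunningham_genus_general n b (by lia) hb hbe
end
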